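/- For every integer s ≥ 1 and every rational number x, one has ∑_{j≥0, 2j+1≤s} (1/((2j+1)!·2^{2j})) · ∑_{k=0}^{s-2j-1} ((-1)^k/(k!·2^k·(s-2j-k-1)!)) · x^{s-2j-k-1} = x^s/s! − (x−1)^s/s!. -/

import Mathlib

/-!
In terms of generating functions the identity is
`exp (x * t) - exp ((x - 1) * t) = 2 * sinh (t / 2) * exp ((x - 1 / 2) * t)`, compared at `t ^ s`.
The sum over `j` comes from the odd series `2 * sinh (t / 2)`, and the sum over `k` from
`exp ((x - 1 / 2) * t) = exp (-t / 2) * exp (x * t)`. Working with the coefficients, one expands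
`x = (x - 1 / 2) + 1 / 2` and `x - 1 = (x - 1 / 2) - 1 / 2` by the binomial theorem and
subtracts, which cancels the terms of even index.
-/

open Finset

theorem sum_range_filter_odd {M : Type*} [AddCommMonoid M] (f : ℕ → M) (n : ℕ) :
    ∑ m ∈ range n with Odd m, f m = ∑ j ∈ range (n / 2), f (2 * j + 1) := by
  have image_eq : (range (n / 2)).image (fun j => 2 * j + 1) = {m ∈ range n | Odd m} := by
    ext m
    simp only [mem_image, mem_range, mem_filter]
    constructor
    · rintro ⟨j, hj, rfl⟩
      exact ⟨by omega, odd_two_mul_add_one j⟩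
    · rintro ⟨hm, j, rfl⟩
      exact ⟨j, by omega, rfl⟩
  rw [← image_eq, sum_image (fun i _ j _ hij => by omega)]

theorem add_pow_div_factorial {K : Type*} [Semifield K] [CharZero K] (a b : K) (n : ℕ) :
    (a + b) ^ n / (n.factorial : K) =
      ∑ m ∈ range (n + 1),
        a ^ m / (m.factorial : K) * (b ^ (n - m) / ((n - m).factorial : K)) := by
  rw [add_pow, sum_div]
  refine sum_congr rfl fun m hm => ?_
  rw [Nat.cast_choose K (Nat.lt_succ_iff.mp (mem_range.mp hm))]
  have hn : (n.factorial : K) ≠ 0 := Nat.cast_ne_zero.mpr n.factorial_ne_zero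
  field_simp

section Field

variable {K : Type*} [Field K] [CharZero K]

theorem add_pow_div_factorial_sub_sub_pow_div_factorial (a h : K) (n : ℕ) :
    (a + h) ^ n / (n.factorial : K) - (a - h) ^ n / (n.factorial : K) =
      ∑ j ∈ range ((n + 1) / 2),
        2 * h ^ (2 * j + 1) / ((2 * j + 1).factorial : K) *
          (a ^ (n - (2 * j + 1)) / ((n - (2 * j + 1)).factorial : K)) := by
  have even_term (m : ℕ) (hm : ¬Odd m) : h ^ m - (-h) ^ m = 0 := by
    rw [(Nat.not_odd_iff_even.mp hm).neg_pow, sub_self]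
  have odd_term (j : ℕ) : h ^ (2 * j + 1) - (-h) ^ (2 * j + 1) = 2 * h ^ (2 * j + 1) := by
    rw [(odd_two_mul_add_one j).neg_pow, sub_neg_eq_add, ← two_mul]
  calc (a + h) ^ n / (n.factorial : K) - (a - h) ^ n / (n.factorial : K)
      = ∑ m ∈ range (n + 1),
          (h ^ m - (-h) ^ m) / (m.factorial : K) *
            (a ^ (n - m) / ((n - m).factorial : K)) := by
        rw [add_comm a h, sub_eq_neg_add a h, add_pow_div_factorial, add_pow_div_factorial,
          ← sum_sub_distrib]
        simp only [sub_div, sub_mul]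
    _ = ∑ m ∈ range (n + 1) with Odd m,
          (h ^ m - (-h) ^ m) / (m.factorial : K) *
            (a ^ (n - m) / ((n - m).factorial : K)) := by
        refine (sum_filter_of_ne fun m _ hne => ?_).symm
        contrapose! hne
        rw [even_term m (by simpa using hne), zero_div, zero_mul]
    _ = _ := by
        rw [sum_range_filter_odd]
        simp only [odd_term]

theorem sub_half_pow_div_factorial (x : K) (n : ℕ) :
    (x - 1 / 2) ^ n / (n.factorial : K) =
      ∑ k ∈ range (n + 1),
        (-1) ^ k / ((k.factorial : K) * 2 ^ k * ((n - k).factorial : K)) * x ^ (n - k) := by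
  rw [sub_eq_neg_add, ← neg_div, add_pow_div_factorial]
  refine sum_congr rfl fun k _ => ?_
  rw [div_pow]
  field_simp

theorem stmt5_general (s : ℕ) (x : K) :
    ∑ j ∈ (range s).filter (fun j => 2 * j + 1 ≤ s),
        (1 / ((Nat.factorial (2 * j + 1) : K) * 2 ^ (2 * j))) *
          ∑ k ∈ range (s - 2 * j - 1 + 1),
            ((-1 : K) ^ k /
                ((Nat.factorial k : K) * 2 ^ k * (Nat.factorial (s - 2 * j - k - 1) : K)))
              * x ^ (s - 2 * j - k - 1)
      = x ^ s / (Nat.factorial s : K) - (x - 1) ^ s / (Nat.factorial s : K) := by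
  have indices_eq : {j ∈ range s | 2 * j + 1 ≤ s} = range ((s + 1) / 2) := by
    ext j
    simp only [mem_filter, mem_range]
    omega
  have central_difference := add_pow_div_factorial_sub_sub_pow_div_factorial (x - 1 / 2) (1 / 2) s
  rw [sub_add_cancel, sub_sub, add_halves] at central_difference
  rw [central_difference, indices_eq]
  refine sum_congr rfl fun j _ => ?_
  have coeff_eq : 1 / (((2 * j + 1).factorial : K) * 2 ^ (2 * j)) =
      2 * (1 / 2) ^ (2 * j + 1) / ((2 * j + 1).factorial : K) := by
    rw [one_div_pow, pow_succ]
    field_simp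
  rw [coeff_eq, ← Nat.sub_sub, sub_half_pow_div_factorial]
  simp only [Nat.sub_right_comm _ _ 1]

end Field

/-- The central polynomial identity in the inductive step of the proof of Theorem 1:
`∑_{j≥0, 2j+1≤s} (1/((2j+1)!·2^{2j})) · ∑_{k=0}^{s-2j-1} ((-1)^k/(k!·2^k·(s-2j-k-1)!)) · x^{s-2j-k-1}`
equals `x^s/s! − (x−1)^s/s!`, for `s ≥ 1`. -/
theorem stmt5 (s : ℕ) (hs : 1 ≤ s) (x : ℚ) :
    ∑ j ∈ (Finset.range s).filter (fun j => 2 * j + 1 ≤ s),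
        (1 / ((Nat.factorial (2 * j + 1) : ℚ) * 2 ^ (2 * j))) *
          ∑ k ∈ Finset.range (s - 2 * j - 1 + 1),
            ((-1 : ℚ) ^ k /
                ((Nat.factorial k : ℚ) * 2 ^ k * (Nat.factorial (s - 2 * j - k - 1) : ℚ)))
              * x ^ (s - 2 * j - k - 1)
      = x ^ s / (Nat.factorial s : ℚ) - (x - 1) ^ s / (Nat.factorial s : ℚ) :=
  stmt5_general s x
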